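/- For all γ₁, γ₂, γ₃ ∈ ℂ, the operators K := (1/2)K₁, K₊ := K₂ + (1/2)K₃ − (γ₂/2)K₁², K₋ := K₂ − (1/2)K₃ − (γ₂/2)K₁² satisfy ⁅K, K₊⁆ = K₊, ⁅K, K₋⁆ = −K₋, ⁅K₋, K₊⁆ = 2(γ₁² + 2iγ₁γ₂ − 4γ₁γ₃ + 2(γ₂ + 3iγ₃)Ĥ₃)K + 16(γ₂² + 2γ₃² − 2γ₁γ₃ + 2iγ₂γ₃)K³ + 96γ₃²K⁵ (a fifth-order polynomial Higgs algebra), and the structure-function factorization K₊K₋ = Φ₁(Ĥ₃,K)·Φ₂(Ĥ₃,K) with ⁅Φ₁(Ĥ₃,K), Φ₂(Ĥ₃,K)⁆ = 0, where Φ₁(Ĥ₃,K) := (1/4)(Ĥ₃ − 2iγ₁K + 4γ₂K² + 8iγ₃K³) and Φ₂(Ĥ₃,K) := Ĥ₃ + 2iγ₁(K − Id) + 4γ₂(K − Id)² − 8iγ₃(K − Id)³. -/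

import Mathlib

noncomputable section

/-- `V = ℂ[q₁,q₂]`, the polynomial ring in two variables over `ℂ`. -/
abbrev V : Type := MvPolynomial (Fin 2) ℂ

/-- `q̂₁`: multiplication by `q₁`. -/
noncomputable def q1 : Module.End ℂ V := LinearMap.mulLeft ℂ (MvPolynomial.X 0)

/-- `q̂₂`: multiplication by `q₂`. -/
noncomputable def q2 : Module.End ℂ V := LinearMap.mulLeft ℂ (MvPolynomial.X 1)

/-- `p̂₁ = −i ∂/∂q₁`. -/
noncomputable def p1 : Module.End ℂ V :=
  (-Complex.I) • (MvPolynomial.pderiv (0 : Fin 2)).toLinearMap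

/-- `p̂₂ = −i ∂/∂q₂`. -/
noncomputable def p2 : Module.End ℂ V :=
  (-Complex.I) • (MvPolynomial.pderiv (1 : Fin 2)).toLinearMap

/-- `D = q̂₁p̂₁ + q̂₂p̂₂`. -/
noncomputable def Dop : Module.End ℂ V := q1 * p1 + q2 * p2

/-- `Ĉ = q̂₁p̂₂ − q̂₂p̂₁`, the quantum angular momentum. -/
noncomputable def Cop : Module.End ℂ V := q1 * p2 - q2 * p1

/-- `Ĥ₃ = p̂₁² + p̂₂² + γ₁D + γ₂D² + γ₃D³`. -/
noncomputable def H3 (γ₁ γ₂ γ₃ : ℂ) : Module.End ℂ V :=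
  p1 ^ 2 + p2 ^ 2 + γ₁ • Dop + γ₂ • Dop ^ 2 + γ₃ • Dop ^ 3

/-- `Î₃`, the third-order quantum symmetry of `Ĥ₃`. -/
noncomputable def I3 (γ₁ γ₂ γ₃ : ℂ) : Module.End ℂ V :=
  p2 ^ 2 + γ₁ • (q2 * p2) + γ₂ • ((q1 ^ 2 + q2 ^ 2) * p2 ^ 2 - Cop ^ 2)
    + γ₃ • (q2 ^ 3 * (p2 ^ 3 - p1 ^ 2 * p2) + (q1 ^ 3 + 3 * (q1 * q2 ^ 2)) * (p1 * p2 ^ 2)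
        - (3 * Complex.I) • (q2 ^ 2 * p2 ^ 2) - (3 * Complex.I) • (q1 * q2 * p1 * p2)
        - q2 * p2)

/-- `Î₃′`, the third-order quantum symmetry of `Ĥ₃`. -/
noncomputable def I3' (γ₁ γ₂ γ₃ : ℂ) : Module.End ℂ V :=
  p1 ^ 2 + γ₁ • (q1 * p1) + γ₂ • ((q1 ^ 2 + q2 ^ 2) * p1 ^ 2)
    + γ₃ • (q1 ^ 3 * (p1 ^ 3 - p1 * p2 ^ 2) + (q2 ^ 3 + 3 * (q1 ^ 2 * q2)) * (p1 ^ 2 * p2)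
        - (3 * Complex.I) • (q1 ^ 2 * p1 ^ 2) - (3 * Complex.I) • (q1 * q2 * p1 * p2)
        - q1 * p1)

/-- `K₁ = Ĉ`. -/
noncomputable def K1 : Module.End ℂ V := Cop

/-- `K₂ = (1/2)(Î₃′ − Î₃)`. -/
noncomputable def K2 (γ₁ γ₂ γ₃ : ℂ) : Module.End ℂ V :=
  ((1 : ℂ)/2) • (I3' γ₁ γ₂ γ₃ - I3 γ₁ γ₂ γ₃)

/-- `K₃ = ⁅K₁, K₂⁆`. -/
noncomputable def K3 (γ₁ γ₂ γ₃ : ℂ) : Module.End ℂ V :=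
  K1 * K2 γ₁ γ₂ γ₃ - K2 γ₁ γ₂ γ₃ * K1

/-- The number operator `K = (1/2)K₁`. -/
noncomputable def Kop : Module.End ℂ V := ((1 : ℂ)/2) • K1

/-- The raising operator `K₊ = K₂ + (1/2)K₃ − (γ₂/2)K₁²`. -/
noncomputable def Kplus (γ₁ γ₂ γ₃ : ℂ) : Module.End ℂ V :=
  K2 γ₁ γ₂ γ₃ + ((1 : ℂ)/2) • K3 γ₁ γ₂ γ₃ - (γ₂/2) • K1 ^ 2

/-- The lowering operator `K₋ = K₂ − (1/2)K₃ − (γ₂/2)K₁²`. -/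
noncomputable def Kminus (γ₁ γ₂ γ₃ : ℂ) : Module.End ℂ V :=
  K2 γ₁ γ₂ γ₃ - ((1 : ℂ)/2) • K3 γ₁ γ₂ γ₃ - (γ₂/2) • K1 ^ 2

/-- `Φ₁(Ĥ₃,K) = (1/4)(Ĥ₃ − 2iγ₁K + 4γ₂K² + 8iγ₃K³)`. -/
noncomputable def Phi1op (γ₁ γ₂ γ₃ : ℂ) : Module.End ℂ V :=
  ((1 : ℂ)/4) • (H3 γ₁ γ₂ γ₃ - (2 * Complex.I * γ₁) • Kop + (4 * γ₂) • Kop ^ 2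
    + (8 * Complex.I * γ₃) • Kop ^ 3)

/-- `Φ₂(Ĥ₃,K) = Ĥ₃ + 2iγ₁(K − Id) + 4γ₂(K − Id)² − 8iγ₃(K − Id)³`. -/
noncomputable def Phi2op (γ₁ γ₂ γ₃ : ℂ) : Module.End ℂ V :=
  H3 γ₁ γ₂ γ₃ + (2 * Complex.I * γ₁) • (Kop - 1) + (4 * γ₂) • (Kop - 1) ^ 2
    - (8 * Complex.I * γ₃) • (Kop - 1) ^ 3


namespace Zer
open MvPolynomial

def Z : V := X 0 + C Complex.I * X 1
def W : V := X 0 - C Complex.I * X 1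
def z : Module.End ℂ V := LinearMap.mulLeft ℂ Z
def w : Module.End ℂ V := LinearMap.mulLeft ℂ W
def u : Module.End ℂ V := ((1:ℂ)/2) • ((pderiv (0 : Fin 2)).toLinearMap - Complex.I • (pderiv (1 : Fin 2)).toLinearMap)
def v : Module.End ℂ V := ((1:ℂ)/2) • ((pderiv (0 : Fin 2)).toLinearMap + Complex.I • (pderiv (1 : Fin 2)).toLinearMap)

lemma z_app (f : V) : z f = Z * f := rfl
lemma w_app (f : V) : w f = W * f := rfl

lemma pd_comm (f : V) : pderiv (1 : Fin 2) (pderiv (0 : Fin 2) f) = pderiv 0 (pderiv 1 f) := by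
  have h : ⁅(pderiv (1 : Fin 2) : Derivation ℂ V V), (pderiv (0 : Fin 2) : Derivation ℂ V V)⁆ = 0 := by
    apply MvPolynomial.derivation_ext
    intro i
    rw [Derivation.commutator_apply]
    fin_cases i <;> simp [pderiv_X, Pi.single_apply]
  have := congrArg (fun D => D f) h
  simp only [Derivation.commutator_apply, Derivation.zero_apply] at this
  exact sub_eq_zero.mp this

lemma vu (f : V) : v (u f) = u (v f) := by
  simp only [u, v, LinearMap.smul_apply, LinearMap.sub_apply, LinearMap.add_apply, Derivation.coeFn_coe, map_add, map_sub, map_smul, pd_comm,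
    Derivation.map_smul]
  module

lemma CI : (C Complex.I : V) * C Complex.I = -1 := by
  rw [← C_mul, Complex.I_mul_I]; simp

lemma uZ (f : V) : u (Z * f) = f + Z * u f := by
  apply MvPolynomial.funext; intro x
  simp [u, Z, pderiv_X, Pi.single_apply, Derivation.leibniz, smul_eq_C_mul]
  ring_nf; simp only [Complex.I_sq]; ring
lemma uW (f : V) : u (W * f) = W * u f := by
  apply MvPolynomial.funext; intro x
  simp [u, W, pderiv_X, Pi.single_apply, Derivation.leibniz, smul_eq_C_mul]
  ring_nf; simp only [Complex.I_sq]; ring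
lemma vW (f : V) : v (W * f) = f + W * v f := by
  apply MvPolynomial.funext; intro x
  simp [v, W, pderiv_X, Pi.single_apply, Derivation.leibniz, smul_eq_C_mul]
  ring_nf; simp only [Complex.I_sq]; ring
lemma vZ (f : V) : v (Z * f) = Z * v f := by
  apply MvPolynomial.funext; intro x
  simp [v, Z, pderiv_X, Pi.single_apply, Derivation.leibniz, smul_eq_C_mul]
  ring_nf; simp only [Complex.I_sq]; ring

lemma uC (c : ℂ) (f : V) : u (C c * f) = C c * u f := by
  rw [← smul_eq_C_mul, map_smul, smul_eq_C_mul]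
lemma vC (c : ℂ) (f : V) : v (C c * f) = C c * v f := by
  rw [← smul_eq_C_mul, map_smul, smul_eq_C_mul]

lemma p1_app (f : V) : p1 f = C (-Complex.I) * (u f + v f) := by
  apply MvPolynomial.funext; intro x
  simp [p1, u, v, smul_eq_C_mul]; ring
lemma p2_app (f : V) : p2 f = u f - v f := by
  apply MvPolynomial.funext; intro x
  simp [p2, u, v, smul_eq_C_mul]; ring
lemma q1_app (f : V) : q1 f = C (1/2) * ((Z + W) * f) := by
  apply MvPolynomial.funext; intro x
  simp [q1, Z, W]; ring
lemma q2_app (f : V) : q2 f = C (-Complex.I/2) * ((Z - W) * f) := by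
  apply MvPolynomial.funext; intro x
  simp [q2, Z, W]; ring_nf; simp only [Complex.I_sq]; ring

/-- Euler operators. -/
def a : Module.End ℂ V := z * u
def b : Module.End ℂ V := w * v

lemma C_eq : Cop = a - b := by
  apply LinearMap.ext; intro f
  apply MvPolynomial.funext; intro x
  simp only [Cop, a, b, LinearMap.sub_apply, Module.End.mul_apply, Module.End.one_apply, p1_app, p2_app, q1_app, q2_app, z_app, w_app]
  simp; ring_nf; simp only [Complex.I_sq]; ring

lemma D_eq : Dop = (-Complex.I) • (a + b) := by
  apply LinearMap.ext; intro f
  apply MvPolynomial.funext; intro x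
  simp only [Dop, a, b, LinearMap.smul_apply, LinearMap.add_apply, Module.End.mul_apply, Module.End.one_apply, p1_app, p2_app, q1_app, q2_app, z_app, w_app, smul_eq_C_mul]
  simp; ring

lemma PP_eq : p1 ^ 2 + p2 ^ 2 = (-4 : ℂ) • (u * v) := by
  apply LinearMap.ext; intro f
  apply MvPolynomial.funext; intro x
  simp only [pow_two, LinearMap.smul_apply, LinearMap.add_apply, Module.End.mul_apply, Module.End.one_apply, p1_app, p2_app, uC, vC, map_add, map_sub, vu, smul_eq_C_mul]
  simp; ring_nf; simp only [Complex.I_sq]; ring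

def A (α β δ : ℂ) : Module.End ℂ V :=
  (-2 : ℂ) • (v * v) + (2 * α) • (z * v) + (2 * β) • (z * b * v) + (2 * δ) • (z * (a + 1) * (a + 1) * v) + (6 * δ) • (z * b * b * v)
def B (α β δ : ℂ) : Module.End ℂ V :=
  (-2 : ℂ) • (u * u) + (2 * α) • (w * u) + (2 * β) • (w * a * u) + (2 * δ) • (w * (b + 1) * (b + 1) * u) + (6 * δ) • (w * a * a * u)
def H (α β δ : ℂ) : Module.End ℂ V :=
  (-4 : ℂ) • (u * v) + (2 * α) • (a + b) + β • ((a + b) * (a + b)) + (2 * δ) • ((a + b) * (a + b) * (a + b))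

lemma H_eq (γ₁ γ₂ γ₃ : ℂ) : H3 γ₁ γ₂ γ₃ = H (-Complex.I * γ₁ / 2) (-γ₂) (Complex.I * γ₃ / 2) := by
  have h3 : Complex.I ^ 3 = -Complex.I := by rw [pow_succ, Complex.I_sq]; ring
  have e2 : γ₂ • ((-Complex.I) • (a + b)) ^ 2 = (-γ₂) • ((a + b) * (a + b)) := by
    simp only [pow_succ, pow_zero, one_mul, smul_mul_assoc, mul_smul_comm, smul_smul]
    congr 1; linear_combination γ₂ * Complex.I_sq
  have e3 : γ₃ • ((-Complex.I) • (a + b)) ^ 3 = (2 * (Complex.I * γ₃ / 2)) • ((a + b) * (a + b) * (a + b)) := by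
    simp only [pow_succ, pow_zero, one_mul, smul_mul_assoc, mul_smul_comm, smul_smul]
    congr 1; linear_combination -γ₃ * h3
  rw [H3, H, D_eq, PP_eq, e2, e3]
  module

lemma L0 : p1 ^ 2 - p2 ^ 2 = (-2 : ℂ) • (u * u + v * v) := by
  apply LinearMap.ext; intro f
  apply MvPolynomial.funext; intro x
  simp only [pow_two, LinearMap.smul_apply, LinearMap.add_apply, LinearMap.sub_apply, Module.End.mul_apply, p1_app, p2_app, uC, vC, map_add, map_sub, vu, smul_eq_C_mul]
  simp; ring_nf; simp only [Complex.I_sq]; ring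

lemma L1 : q1 * p1 - q2 * p2 = (-Complex.I) • (z * v + w * u) := by
  apply LinearMap.ext; intro f
  apply MvPolynomial.funext; intro x
  simp only [LinearMap.smul_apply, LinearMap.add_apply, LinearMap.sub_apply, Module.End.mul_apply, p1_app, p2_app, q1_app, q2_app, z_app, w_app, smul_eq_C_mul]
  simp; ring

lemma L2 : (q1 ^ 2 + q2 ^ 2) * p1 ^ 2 - ((q1 ^ 2 + q2 ^ 2) * p2 ^ 2 - Cop ^ 2) =
    (-2 : ℂ) • (z * b * v + w * a * u) + Cop ^ 2 := by
  have e : (q1 ^ 2 + q2 ^ 2) * (p1 ^ 2 - p2 ^ 2) = (-2 : ℂ) • (z * b * v + w * a * u) := by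
    rw [L0]
    apply LinearMap.ext; intro f
    apply MvPolynomial.funext; intro x
    simp only [pow_two, a, b, LinearMap.smul_apply, LinearMap.add_apply, LinearMap.sub_apply, Module.End.mul_apply, q1_app, q2_app, z_app, w_app, smul_eq_C_mul]
    simp; ring_nf; simp only [Complex.I_sq]; ring
  rw [← e, mul_sub]; abel

lemma L3 : (q1 ^ 3 * (p1 ^ 3 - p1 * p2 ^ 2) + (q2 ^ 3 + 3 * (q1 ^ 2 * q2)) * (p1 ^ 2 * p2)
        - (3 * Complex.I) • (q1 ^ 2 * p1 ^ 2) - (3 * Complex.I) • (q1 * q2 * p1 * p2)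
        - q1 * p1) - (q2 ^ 3 * (p2 ^ 3 - p1 ^ 2 * p2) + (q1 ^ 3 + 3 * (q1 * q2 ^ 2)) * (p1 * p2 ^ 2)
        - (3 * Complex.I) • (q2 ^ 2 * p2 ^ 2) - (3 * Complex.I) • (q1 * q2 * p1 * p2)
        - q2 * p2) = Complex.I • (z * (a + 1) * (a + 1) * v + (3:ℂ) • (z * b * b * v) +
          w * (b + 1) * (b + 1) * u + (3:ℂ) • (w * a * a * u)) := by
  have h3 : Complex.I ^ 3 = -Complex.I := by rw [pow_succ, Complex.I_sq]; ring
  have h4 : Complex.I ^ 4 = 1 := Complex.I_pow_four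
  have h5 : Complex.I ^ 5 = Complex.I := by rw [pow_succ, h4]; ring
  have h6 : Complex.I ^ 6 = -1 := by rw [pow_succ, h5, Complex.I_mul_I]
  have h7 : Complex.I ^ 7 = -Complex.I := by rw [pow_succ, h6]; ring
  apply LinearMap.ext; intro f
  apply MvPolynomial.funext; intro x
  have e3 (g : V) : (3 : Module.End ℂ V) g = 3 * g := by
    rw [show (3 : Module.End ℂ V) = (3:ℕ) by norm_num, Module.End.natCast_apply, nsmul_eq_mul]; norm_num
  simp only [a, b, pow_succ, pow_zero, one_mul, LinearMap.smul_apply, LinearMap.add_apply, LinearMap.sub_apply, Module.End.mul_apply, Module.End.one_apply, e3, p1_app, p2_app, q1_app, q2_app, z_app, w_app, uC, vC, uZ, uW, vZ, vW, map_add, map_sub, vu, smul_eq_C_mul]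
  simp
  ring_nf; simp only [Complex.I_sq, h3, h4, h5, h6, h7]; ring

lemma K2_eq (γ₁ γ₂ γ₃ : ℂ) : K2 γ₁ γ₂ γ₃ = ((1:ℂ)/2) • (A (-Complex.I * γ₁ / 2) (-γ₂) (Complex.I * γ₃ / 2)
   + B (-Complex.I * γ₁ / 2) (-γ₂) (Complex.I * γ₃ / 2)) + (γ₂/2) • Cop ^ 2 := by
  have l0 := L0
  have l1 := L1
  have l2 := L2
  have l3 := L3
  rw [K2, I3, I3', A, B]
  linear_combination (norm := module) ((1:ℂ)/2) • l0 + (γ₁/2) • l1 + (γ₂/2) • l2 + (γ₃/2) • l3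

lemma CA (α β δ : ℂ) : Cop * A α β δ - A α β δ * Cop = (2:ℂ) • A α β δ := by
  apply LinearMap.ext; intro f
  apply MvPolynomial.funext; intro x
  simp only [A, C_eq, a, b, LinearMap.smul_apply, LinearMap.add_apply, LinearMap.sub_apply, Module.End.mul_apply, Module.End.one_apply, z_app, w_app, uC, vC, uZ, uW, vZ, vW, map_add, map_sub, vu, smul_eq_C_mul]
  simp
  ring

lemma CB (α β δ : ℂ) : Cop * B α β δ - B α β δ * Cop = (-2:ℂ) • B α β δ := by
  apply LinearMap.ext; intro f
  apply MvPolynomial.funext; intro x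
  simp only [B, C_eq, a, b, LinearMap.smul_apply, LinearMap.add_apply, LinearMap.sub_apply, Module.End.mul_apply, Module.End.one_apply, z_app, w_app, uC, vC, uZ, uW, vZ, vW, map_add, map_sub, vu, smul_eq_C_mul]
  simp
  ring

lemma CH (α β δ : ℂ) : Cop * H α β δ = H α β δ * Cop := by
  apply LinearMap.ext; intro f
  apply MvPolynomial.funext; intro x
  simp only [H, C_eq, a, b, LinearMap.smul_apply, LinearMap.add_apply, LinearMap.sub_apply, Module.End.mul_apply, Module.End.one_apply, z_app, w_app, uC, vC, uZ, uW, vZ, vW, map_add, map_sub, vu, smul_eq_C_mul]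
  simp
  ring

/-- `4 Φ₁`. -/
def P1 (α β δ : ℂ) : Module.End ℂ V :=
  H α β δ + (2 * α) • Cop - β • (Cop * Cop) + (2 * δ) • (Cop * Cop * Cop)
def P2 (α β δ : ℂ) : Module.End ℂ V :=
  H α β δ - (2 * α) • (Cop - (2:ℂ) • 1) - β • ((Cop - (2:ℂ) • 1) * (Cop - (2:ℂ) • 1))
   - (2 * δ) • ((Cop - (2:ℂ) • 1) * (Cop - (2:ℂ) • 1) * (Cop - (2:ℂ) • 1))

/-- factored forms -/
def F1 (α β δ : ℂ) : Module.End ℂ V :=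
  (-4 : ℂ) • (u * v) + (4 * α) • a + (4 * β) • (a * b) + (4 * δ) • (a * a * a) + (12 * δ) • (a * b * b)
def F2 (α β δ : ℂ) : Module.End ℂ V :=
  (-4 : ℂ) • (u * v) + (4 * α) • (b + 1) + (4 * β) • ((a - 1) * (b + 1)) + (4 * δ) • ((b + 1) * (b + 1) * (b + 1))
    + (12 * δ) • ((a - 1) * (a - 1) * (b + 1))

lemma P1_eq (α β δ : ℂ) : P1 α β δ = F1 α β δ := by
  apply LinearMap.ext; intro f
  apply MvPolynomial.funext; intro x
  simp only [P1, F1, H, C_eq, a, b, LinearMap.smul_apply, LinearMap.add_apply, LinearMap.sub_apply, Module.End.mul_apply, Module.End.one_apply, z_app, w_app, uC, vC, uZ, uW, vZ, vW, map_add, map_sub, vu, smul_eq_C_mul]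
  simp
  ring

lemma P2_eq (α β δ : ℂ) : P2 α β δ = F2 α β δ := by
  apply LinearMap.ext; intro f
  apply MvPolynomial.funext; intro x
  simp only [P2, F2, H, C_eq, a, b, LinearMap.smul_apply, LinearMap.add_apply, LinearMap.sub_apply, Module.End.mul_apply, Module.End.one_apply, z_app, w_app, uC, vC, uZ, uW, vZ, vW, map_add, map_sub, vu, smul_eq_C_mul]
  simp
  ring

lemma AB_eq (α β δ : ℂ) : (4:ℂ) • (A α β δ * B α β δ) = P1 α β δ * P2 α β δ := by
  rw [P1_eq, P2_eq]
  apply LinearMap.ext; intro f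
  apply MvPolynomial.funext; intro x
  simp only [A, B, F1, F2, a, b, LinearMap.smul_apply, LinearMap.add_apply, LinearMap.sub_apply, Module.End.mul_apply, Module.End.one_apply, z_app, w_app, uC, vC, uZ, uW, vZ, vW, map_add, map_sub, vu, smul_eq_C_mul]
  simp
  ring

lemma BA_eq (α β δ : ℂ) : B α β δ * A α β δ - A α β δ * B α β δ =
   (-4 * α ^ 2 + 4 * α * β - 16 * α * δ) • Cop + (-2 * β + 12 * δ) • (H α β δ * Cop)
    + (2 * β ^ 2 - 16 * δ ^ 2 - 16 * α * δ - 8 * β * δ) • (Cop * Cop * Cop) + (-12 * δ ^ 2) • (Cop * Cop * Cop * Cop * Cop) := by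
  apply LinearMap.ext; intro f
  apply MvPolynomial.funext; intro x
  simp only [A, B, H, C_eq, a, b, LinearMap.smul_apply, LinearMap.add_apply, LinearMap.sub_apply, Module.End.mul_apply, Module.End.one_apply, z_app, w_app, uC, vC, uZ, uW, vZ, vW, map_add, map_sub, vu, smul_eq_C_mul]
  simp
  ring

lemma Kplus_eq (γ₁ γ₂ γ₃ : ℂ) : Kplus γ₁ γ₂ γ₃ = A (-Complex.I * γ₁ / 2) (-γ₂) (Complex.I * γ₃ / 2) := by
  rw [Kplus, K3, K2_eq, K1]
  have h1 := CA (-Complex.I * γ₁ / 2) (-γ₂) (Complex.I * γ₃ / 2)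
  have h2 := CB (-Complex.I * γ₁ / 2) (-γ₂) (Complex.I * γ₃ / 2)
  generalize A _ _ _ = a at *
  generalize B _ _ _ = b at *
  simp only [mul_add, add_mul, mul_smul_comm, smul_mul_assoc, ← pow_succ, ← pow_succ']
  linear_combination (norm := module) ((1:ℂ)/4) • h1 + ((1:ℂ)/4) • h2

lemma Kminus_eq (γ₁ γ₂ γ₃ : ℂ) : Kminus γ₁ γ₂ γ₃ = B (-Complex.I * γ₁ / 2) (-γ₂) (Complex.I * γ₃ / 2) := by
  rw [Kminus, K3, K2_eq, K1]
  have h1 := CA (-Complex.I * γ₁ / 2) (-γ₂) (Complex.I * γ₃ / 2)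
  have h2 := CB (-Complex.I * γ₁ / 2) (-γ₂) (Complex.I * γ₃ / 2)
  generalize A _ _ _ = a at *
  generalize B _ _ _ = b at *
  simp only [mul_add, add_mul, mul_smul_comm, smul_mul_assoc, ← pow_succ, ← pow_succ']
  linear_combination (norm := module) (-(1:ℂ)/4) • h1 - ((1:ℂ)/4) • h2

lemma Phi1_eq (γ₁ γ₂ γ₃ : ℂ) : Phi1op γ₁ γ₂ γ₃ = ((1:ℂ)/4) • P1 (-Complex.I * γ₁ / 2) (-γ₂) (Complex.I * γ₃ / 2) := by
  rw [Phi1op, H_eq, Kop, K1, P1]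
  simp only [pow_succ, pow_zero, one_mul, smul_mul_assoc, mul_smul_comm, smul_smul]
  module

lemma Phi2_eq (γ₁ γ₂ γ₃ : ℂ) : Phi2op γ₁ γ₂ γ₃ = P2 (-Complex.I * γ₁ / 2) (-γ₂) (Complex.I * γ₃ / 2) := by
  have : Kop - 1 = ((1:ℂ)/2) • (Cop - (2:ℂ) • 1) := by rw [Kop, K1]; module
  rw [Phi2op, H_eq, this, P2]
  generalize Cop - (2:ℂ) • 1 = T
  simp only [pow_succ, pow_zero, one_mul, smul_mul_assoc, mul_smul_comm, smul_smul]
  module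

lemma P_comm (α β δ : ℂ) : Commute (P1 α β δ) (P2 α β δ) := by
  have hH : Commute Cop (H α β δ) := CH α β δ
  have key : ∀ T, Commute T (H α β δ) → Commute T Cop → Commute T (P2 α β δ) := by
    intro T h1 h2
    have h3 : Commute T (Cop - (2:ℂ) • 1) := h2.sub_right ((Commute.one_right T).smul_right _)
    exact ((h1.sub_right (h3.smul_right _)).sub_right ((h3.mul_right h3).smul_right _)).sub_right
      (((h3.mul_right h3).mul_right h3).smul_right _)
  have k1 := key _ (Commute.refl _) hH.symm
  have k2 := key _ hH (Commute.refl _)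
  exact ((k1.add_left (k2.smul_left _)).sub_left ((k2.mul_left k2).smul_left _)).add_left
    (((k2.mul_left k2).mul_left k2).smul_left _)

end Zer

/-- the fifth-order polynomial Higgs algebra generated by
`(K, K₊, K₋)` and the factorization `K₊K₋ = Φ₁Φ₂` with `⁅Φ₁,Φ₂⁆ = 0`. -/
theorem cubic_zernike_higgs_algebra (γ₁ γ₂ γ₃ : ℂ) :
    Kop * Kplus γ₁ γ₂ γ₃ - Kplus γ₁ γ₂ γ₃ * Kop = Kplus γ₁ γ₂ γ₃ ∧
    Kop * Kminus γ₁ γ₂ γ₃ - Kminus γ₁ γ₂ γ₃ * Kop = -Kminus γ₁ γ₂ γ₃ ∧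
    Kminus γ₁ γ₂ γ₃ * Kplus γ₁ γ₂ γ₃ - Kplus γ₁ γ₂ γ₃ * Kminus γ₁ γ₂ γ₃
      = (2 * (γ₁ ^ 2 + 2 * Complex.I * γ₁ * γ₂ - 4 * γ₁ * γ₃)) • Kop
        + (4 * (γ₂ + 3 * Complex.I * γ₃)) • (H3 γ₁ γ₂ γ₃ * Kop)
        + (16 * (γ₂ ^ 2 + 2 * γ₃ ^ 2 - 2 * γ₁ * γ₃ + 2 * Complex.I * γ₂ * γ₃)) • Kop ^ 3
        + (96 * γ₃ ^ 2) • Kop ^ 5 ∧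
    Kplus γ₁ γ₂ γ₃ * Kminus γ₁ γ₂ γ₃ = Phi1op γ₁ γ₂ γ₃ * Phi2op γ₁ γ₂ γ₃ ∧
    Phi1op γ₁ γ₂ γ₃ * Phi2op γ₁ γ₂ γ₃ - Phi2op γ₁ γ₂ γ₃ * Phi1op γ₁ γ₂ γ₃ = 0 := by
  refine ⟨?_, ?_, ?_, ?_, ?_⟩
  · have h := Zer.CA (-Complex.I * γ₁ / 2) (-γ₂) (Complex.I * γ₃ / 2)
    rw [Zer.Kplus_eq, Kop, K1, smul_mul_assoc, mul_smul_comm]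
    linear_combination (norm := module) ((1:ℂ)/2) • h
  · have h := Zer.CB (-Complex.I * γ₁ / 2) (-γ₂) (Complex.I * γ₃ / 2)
    rw [Zer.Kminus_eq, Kop, K1, smul_mul_assoc, mul_smul_comm]
    linear_combination (norm := module) ((1:ℂ)/2) • h
  · rw [Zer.Kminus_eq, Zer.Kplus_eq, Zer.BA_eq, Zer.H_eq, Kop, K1]
    have h2 := Complex.I_sq
    simp only [smul_mul_assoc, mul_smul_comm, smul_smul, pow_succ, pow_zero, one_mul]
    congr 1
    · congr 1
      · congr 1
        · congr 1
          linear_combination (-γ₁ ^ 2 + 4 * γ₁ * γ₃) * h2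
        · congr 1; ring
      · congr 1
        linear_combination (-4 * γ₃ ^ 2 + 4 * γ₁ * γ₃) * h2
    · congr 1
      linear_combination (-3 * γ₃ ^ 2) * h2
  · rw [Zer.Kminus_eq, Zer.Kplus_eq, Zer.Phi1_eq, Zer.Phi2_eq, smul_mul_assoc, ← Zer.AB_eq, smul_smul]
    norm_num
  · rw [Zer.Phi1_eq, Zer.Phi2_eq]
    exact sub_eq_zero.mpr ((Zer.P_comm _ _ _).smul_left _)
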